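/- In the heat kernel setup, fix an integer b ≥ 2, real numbers α, β, a positive real γ, an integer a ≥ γ, and an integer a' ≥ 1. Define the low-frequency part Δ_{−1}(f,g) := P_1^{(b)}( P_1^{(b)} f · P_1^{(b)} g ). Then there is a constant C such that for all f, g ∈ L^∞(μ): ‖e^{−L}Δ_{−1}(f,g)‖_∞ + sup_{0<s≤1} s^{−γ/2} ‖Q_s^{(a)} Δ_{−1}(f,g)‖_∞ ≤ C·‖f‖_{C^α,(a')}·‖g‖_{C^β,(a')}, i.e. ‖Δ_{−1}(f,g)‖_{C^γ} ≲ ‖f‖_{C^α}‖g‖_{C^β}. (Proposition 3.1.) -/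

import Mathlib

open MeasureTheory Metric Set
open scoped ENNReal NNReal

noncomputable section

/-- The (pointwise) supremum norm of a real-valued function, valued in `ℝ≥0∞`. -/
def supNorm {M : Type*} (g : M → ℝ) : ℝ≥0∞ := ⨆ x, (‖g x‖₊ : ℝ≥0∞)

/-- `γ_a = ∫_0^∞ s^a e^{-s} ds/s`. -/
def gammaInt (a : ℕ) : ℝ := ∫ s in Set.Ioi (0 : ℝ), s ^ a * Real.exp (-s) / s

/-- A conservative heat kernel on a doubling metric measure space, satisfying the
Gaussian upper estimates (UE) for all time derivatives, for `0 < t ≤ 1`. -/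
structure HeatKernelSetup (M : Type*) [MeasurableSpace M] [MetricSpace M] where
  μ : Measure M
  p : ℝ → M → M → ℝ
  C_D : ℝ
  C_D_pos : 0 < C_D
  doubling : ∀ (x : M) (r : ℝ), 0 < r →
    μ (Metric.ball x (2 * r)) ≤ ENNReal.ofReal C_D * μ (Metric.ball x r)
  p_nonneg : ∀ t : ℝ, 0 < t → ∀ x y, 0 ≤ p t x y
  p_symm : ∀ t : ℝ, 0 < t → ∀ x y, p t x y = p t y x
  p_meas : ∀ t : ℝ, 0 < t → Measurable (Function.uncurry (p t))
  semigroup : ∀ s t : ℝ, 0 < s → 0 < t → ∀ x z,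
    p (s + t) x z = ∫ y, p s x y * p t y z ∂μ
  conservative : ∀ t : ℝ, 0 < t → ∀ x, ∫ y, p t x y ∂μ = 1
  smooth : ∀ (x y : M) (m : ℕ) (t : ℝ), 0 < t →
    DifferentiableAt ℝ (iteratedDeriv m (fun s => p s x y)) t
  diff_under_int : ∀ (f : M → ℝ), Measurable f → supNorm f < ⊤ →
    ∀ (m : ℕ) (x : M) (t : ℝ), 0 < t →
      iteratedDeriv m (fun s => ∫ y, p s x y * f y ∂μ) t
        = ∫ y, iteratedDeriv m (fun s => p s x y) t * f y ∂μ
  UE : ∀ m : ℕ, ∃ C, 0 < C ∧ ∃ c, 0 < c ∧ ∀ t : ℝ, 0 < t → t ≤ 1 → ∀ x y,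
    |t ^ m * iteratedDeriv m (fun s => p s x y) t|
      ≤ C / Real.sqrt ((μ (Metric.ball x (Real.sqrt t))).toReal
            * (μ (Metric.ball y (Real.sqrt t))).toReal)
          * Real.exp (-c * dist x y ^ 2 / t)

namespace HeatKernelSetup

variable {M : Type*} [MeasurableSpace M] [MetricSpace M] (H : HeatKernelSetup M)

/-- The semigroup `e^{-tL}` applied to `f`. -/
def S (t : ℝ) (f : M → ℝ) (x : M) : ℝ := ∫ y, H.p t x y * f y ∂H.μ

/-- `Q_t^{(a)} f = (-1)^a t^a ∂_t^a (e^{-tL} f)`. -/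
def Q (a : ℕ) (t : ℝ) (f : M → ℝ) (x : M) : ℝ :=
  (-1 : ℝ) ^ a * t ^ a * iteratedDeriv a (fun s => H.S s f x) t

/-- `P_t^{(a)} f = ∑_{k<a} c_{a,k} (-1)^k t^k ∂_t^k (e^{-tL} f)`, where the coefficients
`c_{a,k} = 1/k!` are determined by `φ_a(x) = (∑_k c_{a,k} x^k) e^{-x}`. -/
def P (a : ℕ) (t : ℝ) (f : M → ℝ) (x : M) : ℝ :=
  ∑ k ∈ Finset.range a, ((Nat.factorial k : ℝ))⁻¹ * (-1 : ℝ) ^ k * t ^ k *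
    iteratedDeriv k (fun s => H.S s f x) t

/-- `(tL)P_t^{(a)} f = ∑_{k<a} c_{a,k} (-1)^{k+1} t^{k+1} ∂_t^{k+1} (e^{-tL} f)`. -/
def LP (a : ℕ) (t : ℝ) (f : M → ℝ) (x : M) : ℝ :=
  ∑ k ∈ Finset.range a, ((Nat.factorial k : ℝ))⁻¹ * (-1 : ℝ) ^ (k + 1) * t ^ (k + 1) *
    iteratedDeriv (k + 1) (fun s => H.S s f x) t

/-- The Hölder norm `‖f‖_{C^σ,(a)} = ‖e^{-L} f‖_∞ + sup_{0<t≤1} t^{-σ/2} ‖Q_t^{(a)} f‖_∞`. -/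
def CNorm (a : ℕ) (σ : ℝ) (f : M → ℝ) : ℝ≥0∞ :=
  supNorm (H.S 1 f) +
    ⨆ t ∈ Set.Ioc (0 : ℝ) 1, ENNReal.ofReal (t ^ (-σ / 2)) * supNorm (H.Q a t f)

/-- The integrand of the paraproduct `Π_g^{(b)}(f)` at frequency scale `t`:
`(tL)P_t^{(b)}( Q_t^{(b-1)} f · P_t^{(b)} g ) + Q_t^{(b-1)}( (tL)P_t^{(b)} f · P_t^{(b)} g )`. -/
def paraInner (b : ℕ) (g f : M → ℝ) (t : ℝ) : M → ℝ := fun y =>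
  H.LP b t (fun z => H.Q (b - 1) t f z * H.P b t g z) y
    + H.Q (b - 1) t (fun z => H.LP b t f z * H.P b t g z) y

/-- `Q_s^{(a)} Π_g^{(b)}(f)`, defined by applying `Q_s^{(a)}` under the time integral. -/
def paraQ (b a : ℕ) (g f : M → ℝ) (s : ℝ) : M → ℝ := fun x =>
  (gammaInt b)⁻¹ * ∫ t in Set.Ioc (0 : ℝ) 1, H.Q a s (H.paraInner b g f t) x / t

/-- `e^{-L} Π_g^{(b)}(f)`, defined by applying `e^{-L}` under the time integral. -/
def paraS (b : ℕ) (g f : M → ℝ) : M → ℝ := fun x =>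
  (gammaInt b)⁻¹ * ∫ t in Set.Ioc (0 : ℝ) 1, H.S 1 (H.paraInner b g f t) x / t

/-- The paraproduct `Π_g^{(b)}(f)` as a function, when the integral converges. -/
def paraFn (b : ℕ) (g f : M → ℝ) : M → ℝ := fun x =>
  (gammaInt b)⁻¹ * ∫ t in Set.Ioc (0 : ℝ) 1, H.paraInner b g f t x / t

/-- The resolution operator `R(v)_t = ∫_0^t P_{t-s}^{(b)} v(s) ds`. -/
def resolve (b : ℕ) (v : ℝ → M → ℝ) (t : ℝ) : M → ℝ := fun x =>
  ∫ s in Set.Ioc (0 : ℝ) t, H.P b (t - s) (v s) x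

end HeatKernelSetup

namespace HeatKernelSetup

variable {M : Type*} [MeasurableSpace M] [MetricSpace M] (H : HeatKernelSetup M)

/-- Time derivatives of the semigroup. -/
def D (m : ℕ) (t : ℝ) (f : M → ℝ) (x : M) : ℝ := iteratedDeriv m (fun s => H.S s f x) t

/-- Time derivatives of the kernel. -/
def dp (m : ℕ) (t : ℝ) (x y : M) : ℝ := iteratedDeriv m (fun s => H.p s x y) t

lemma p_int (t : ℝ) (ht : 0 < t) (x : M) : Integrable (fun y => H.p t x y) H.μ := by
  by_contra h
  have := H.conservative t ht x
  rw [integral_undef h] at this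
  exact zero_ne_one this

lemma v_pos (x : M) : 0 < (H.μ (Metric.ball x (1/2))).toReal := by
  rcases (ENNReal.toReal_nonneg (a := H.μ (Metric.ball x (1/2)))).eq_or_lt with h | h
  · exfalso
    obtain ⟨C, hC, c, hc, hU⟩ := H.UE 0
    have h4 : Real.sqrt (1/4) = 1/2 := by
      rw [show (1/4:ℝ) = (1/2)^2 by norm_num]; exact Real.sqrt_sq (by norm_num)
    have h0 : ∀ y, H.p (1/4) x y = 0 := by
      intro y
      have := hU (1/4) (by norm_num) (by norm_num) x y
      rw [h4, ← h] at this
      simpa using this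
    have := H.conservative (1/4) (by norm_num) x
    simp only [h0, integral_zero] at this
    exact zero_ne_one this
  · exact h

lemma v_ne_top (x : M) : H.μ (Metric.ball x (1/2)) ≠ ⊤ := by
  intro h
  have := H.v_pos x
  rw [h] at this
  simp at this

/-- doubling constant at least one -/
def DD : ℝ := max H.C_D 1

lemma DD_one : 1 ≤ H.DD := le_max_right _ _

lemma ball_pow (x : M) (n : ℕ) :
    H.μ (Metric.ball x (2 ^ n * (1/2))) ≤ ENNReal.ofReal (H.DD ^ n) * H.μ (Metric.ball x (1/2)) := by
  induction n with
  | zero => simp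
  | succ n ih =>
    have h1 := H.doubling x (2 ^ n * (1/2)) (by positivity)
    have h2 : (2:ℝ) ^ (n+1) * (1/2) = 2 * (2 ^ n * (1/2)) := by ring
    rw [h2]
    have hD := H.DD_one
    calc _ ≤ _ := h1
      _ ≤ ENNReal.ofReal H.DD * (ENNReal.ofReal (H.DD ^ n) * H.μ (Metric.ball x (1/2))) :=
          mul_le_mul' (ENNReal.ofReal_le_ofReal (le_max_left _ _)) ih
      _ = _ := by
          rw [← mul_assoc, ← ENNReal.ofReal_mul (by linarith), pow_succ']

lemma ball_nat (x : M) (n : ℕ) :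
    H.μ (Metric.ball x (n + 1)) ≤ ENNReal.ofReal (H.DD ^ (n+1)) * H.μ (Metric.ball x (1/2)) := by
  refine le_trans (measure_mono (Metric.ball_subset_ball ?_)) (H.ball_pow x (n+1))
  have : n + 1 ≤ 2 ^ n := Nat.lt_two_pow_self
  have : (n:ℝ) + 1 ≤ 2 ^ n := by exact_mod_cast this
  rw [pow_succ]; linarith

lemma sigmaFinite : SigmaFinite H.μ := by
  rcases isEmpty_or_nonempty M with h | ⟨⟨x⟩⟩
  · have : H.μ = 0 := Measure.eq_zero_of_isEmpty _
    rw [this]; infer_instance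
  · refine ⟨⟨⟨fun n => Metric.ball x (n+1), fun _ => trivial, fun n => ?_, ?_⟩⟩⟩
    · exact lt_of_le_of_lt (H.ball_nat x n)
        (ENNReal.mul_lt_top ENNReal.ofReal_lt_top (H.v_ne_top x).lt_top)
    · rw [Set.iUnion_eq_univ_iff]
      intro y
      obtain ⟨n, hn⟩ := exists_nat_gt (dist y x)
      exact ⟨n, by simp only [Metric.mem_ball]; linarith⟩

lemma v_comp (x y : M) (n : ℕ) (h : dist x y < n + 1) :
    (H.μ (Metric.ball x (1/2))).toReal ≤ H.DD ^ (n+2) * (H.μ (Metric.ball y (1/2))).toReal := by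
  have h1 : H.μ (Metric.ball x (1/2)) ≤
      ENNReal.ofReal (H.DD ^ (n+2)) * H.μ (Metric.ball y (1/2)) := by
    refine le_trans (measure_mono (Metric.ball_subset_ball' ?_)) (H.ball_pow y (n+2))
    have : n + 1 ≤ 2 ^ n := Nat.lt_two_pow_self
    have : (n:ℝ) + 1 ≤ 2 ^ n := by exact_mod_cast this
    have h2 : (2:ℝ) ^ (n+2) * (1/2) = 2 * 2 ^ n := by ring
    rw [h2]
    have : (1:ℝ) ≤ 2 ^ n := one_le_pow₀ (by norm_num)
    linarith
  have hD := H.DD_one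
  have := ENNReal.toReal_mono (ENNReal.mul_ne_top ENNReal.ofReal_ne_top (H.v_ne_top y)) h1
  rwa [ENNReal.toReal_mul, ENNReal.toReal_ofReal (by positivity)] at this

lemma sum_aux (D c : ℝ) (hD : 1 ≤ D) (hc : 0 < c) :
    Summable (fun n : ℕ => D ^ (2 * n + 3) * Real.exp (-c * n ^ 2)) := by
  have hD0 : 0 < D := by linarith
  have key : ∀ᶠ n : ℕ in Filter.atTop,
      ‖D ^ (2 * n + 3) * Real.exp (-c * n ^ 2)‖ ≤ D ^ 3 * Real.exp (-(n:ℝ)) := by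
    obtain ⟨N, hN⟩ := exists_nat_gt ((2 * Real.log D + 1) / c)
    filter_upwards [Filter.eventually_ge_atTop N] with n hn
    have hn' : (N:ℝ) ≤ n := by exact_mod_cast hn
    have h1 : 2 * Real.log D + 1 ≤ n * c := by
      rw [div_lt_iff₀ hc] at hN
      nlinarith
    rw [Real.norm_of_nonneg (by positivity), pow_add, mul_comm (D ^ (2*n)), mul_assoc]
    gcongr
    have h2 : D ^ (2 * n) = Real.exp (2 * n * Real.log D) := by
      rw [← Real.exp_log hD0, ← Real.exp_nat_mul, Real.exp_log hD0]; push_cast; ring_nf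
    rw [h2, ← Real.exp_add]
    apply Real.exp_le_exp.2
    have : (0:ℝ) ≤ n := by positivity
    nlinarith
  have hs : Summable (fun n : ℕ => D ^ 3 * Real.exp (-(n:ℝ))) := Real.summable_exp_neg_nat.mul_left _
  exact hs.of_norm_bounded_eventually_nat key

lemma dominator (c : ℝ) (hc : 0 < c) : ∃ K : ℝ, 0 ≤ K ∧ ∀ x, ∃ G : M → ℝ, Integrable G H.μ ∧
    (∀ᵐ y ∂H.μ, Real.exp (-c * dist x y ^ 2) / Real.sqrt ((H.μ (Metric.ball x (1/2))).toReal
            * (H.μ (Metric.ball y (1/2))).toReal) ≤ G y) ∧ ∫ y, G y ∂H.μ ≤ K := by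
  have hD := H.DD_one
  have hs := sum_aux H.DD c hD hc
  refine ⟨∑' n : ℕ, H.DD ^ (2 * n + 3) * Real.exp (-c * n ^ 2),
    tsum_nonneg fun n => by positivity, fun x => ?_⟩
  set v := (H.μ (Metric.ball x (1/2))).toReal with hv
  have hvp : 0 < v := H.v_pos x
  have hvE : H.μ (Metric.ball x (1/2)) = ENNReal.ofReal v :=
    (ENNReal.ofReal_toReal (H.v_ne_top x)).symm
  let T : ℕ → Set M := fun n => toMeasurable H.μ (Metric.ball x (n + 1))
  let cn : ℕ → ℝ := fun n => H.DD ^ (n + 2) * Real.exp (-c * n ^ 2) / v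
  have hcn : ∀ n, 0 ≤ cn n := fun n => by positivity
  let g : M → ℝ≥0∞ := fun y => ∑' n, (T n).indicator (fun _ => ENNReal.ofReal (cn n)) y
  have hgm : Measurable g := by
    refine Measurable.tsum fun n => ?_
    exact measurable_const.indicator (measurableSet_toMeasurable _ _)
  have hgi : ∫⁻ y, g y ∂H.μ ≤ ENNReal.ofReal (∑' n : ℕ, H.DD ^ (2 * n + 3) * Real.exp (-c * n ^ 2)) := by
    rw [lintegral_tsum, ENNReal.ofReal_tsum_of_nonneg (fun n => by positivity) hs]
    · refine ENNReal.tsum_le_tsum fun n => ?_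
      rw [lintegral_indicator (measurableSet_toMeasurable _ _), lintegral_const,
        Measure.restrict_apply_univ, measure_toMeasurable]
      calc _ ≤ ENNReal.ofReal (cn n) * (ENNReal.ofReal (H.DD ^ (n+1)) * ENNReal.ofReal v) := by
              gcongr; rw [← hvE]; exact H.ball_nat x n
        _ = _ := by
              rw [← ENNReal.ofReal_mul (by positivity), ← ENNReal.ofReal_mul (hcn n)]
              congr 1
              simp only [cn]
              field_simp
              ring
    · intro n
      exact (measurable_const.indicator (measurableSet_toMeasurable _ _)).aemeasurable
  have hgt : ∫⁻ y, g y ∂H.μ ≠ ⊤ := (lt_of_le_of_lt hgi ENNReal.ofReal_lt_top).ne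
  refine ⟨fun y => (g y).toReal, integrable_toReal_of_lintegral_ne_top hgm.aemeasurable hgt, ?_, ?_⟩
  · filter_upwards [ae_lt_top hgm hgt] with y hy
    rw [← ENNReal.ofReal_le_iff_le_toReal hy.ne]
    let n := ⌊dist x y⌋₊
    have hn1 : (n:ℝ) ≤ dist x y := Nat.floor_le dist_nonneg
    have hn2 : dist x y < n + 1 := Nat.lt_floor_add_one _
    refine le_trans ?_ (ENNReal.le_tsum n)
    have hyT : y ∈ T n := subset_toMeasurable _ _ (by rw [Metric.mem_ball, dist_comm]; exact hn2)
    rw [Set.indicator_of_mem hyT]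
    apply ENNReal.ofReal_le_ofReal
    have hw := H.v_pos y
    have hc1 := H.v_comp x y n hn2
    have hDn : 1 ≤ H.DD ^ (n+2) := one_le_pow₀ hD
    have hsq : v ≤ H.DD ^ (n+2) * Real.sqrt (v * (H.μ (Metric.ball y (1/2))).toReal) := by
      have h1 : v = Real.sqrt (v ^ 2) := (Real.sqrt_sq hvp.le).symm
      have h2 : H.DD ^ (n+2) * Real.sqrt (v * (H.μ (Metric.ball y (1/2))).toReal)
        = Real.sqrt ((H.DD ^ (n+2))^2 * (v * (H.μ (Metric.ball y (1/2))).toReal)) := by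
        rw [Real.sqrt_mul (sq_nonneg (H.DD ^ (n+2))), Real.sqrt_sq (by positivity)]
      rw [h2]
      conv_lhs => rw [h1]
      apply Real.sqrt_le_sqrt
      have h3 : v * v ≤ v * (H.DD ^ (n+2) * (H.μ (Metric.ball y (1/2))).toReal) := by gcongr
      have h4 : 0 ≤ v * (H.μ (Metric.ball y (1/2))).toReal := by positivity
      nlinarith [mul_nonneg (sub_nonneg.2 hDn) (mul_nonneg (by positivity : 0 ≤ H.DD ^ (n+2)) h4)]
    have hsp : 0 < Real.sqrt (v * (H.μ (Metric.ball y (1/2))).toReal) := Real.sqrt_pos.2 (by positivity)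
    have he : Real.exp (-c * dist x y ^ 2) ≤ Real.exp (-c * n ^ 2) := by
      apply Real.exp_le_exp.2
      have : (n:ℝ)^2 ≤ dist x y ^ 2 := by gcongr
      nlinarith
    simp only [cn]
    rw [div_le_div_iff₀ hsp hvp]
    calc _ ≤ Real.exp (-c * n ^ 2) * (H.DD ^ (n+2) * Real.sqrt (v * (H.μ (Metric.ball y (1/2))).toReal)) := by
          gcongr
      _ = _ := by ring
  · rw [integral_toReal hgm.aemeasurable (ae_lt_top hgm hgt)]
    exact ENNReal.toReal_le_of_le_ofReal (tsum_nonneg fun n => by positivity) hgi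

lemma kernel_dom (m : ℕ) : ∃ K : ℝ, 0 ≤ K ∧ ∀ x, ∃ G : M → ℝ, Integrable G H.μ ∧
    (∀ᵐ y ∂H.μ, ∀ s ∈ Set.Icc (1/4:ℝ) 1, |H.dp m s x y| ≤ G y) ∧ ∫ y, G y ∂H.μ ≤ K := by
  obtain ⟨C, hC, c, hc, hU⟩ := H.UE m
  obtain ⟨K, hK, hd⟩ := H.dominator c hc
  refine ⟨4 ^ m * C * K, by positivity, fun x => ?_⟩
  obtain ⟨G, hG, hle, hi⟩ := hd x
  refine ⟨fun y => 4 ^ m * C * G y, hG.const_mul _, ?_, ?_⟩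
  · filter_upwards [hle] with y hy s hs
    have hs0 : 0 < s := by linarith [hs.1]
    have h1 := hU s hs0 hs.2 x y
    rw [abs_mul, abs_of_pos (by positivity : 0 < s ^ m)] at h1
    have hsq : 1/2 ≤ Real.sqrt s := by
      apply Real.le_sqrt_of_sq_le; linarith [hs.1]
    have hfin : ∀ z : M, H.μ (Metric.ball z (Real.sqrt s)) ≠ ⊤ := by
      intro z
      refine ne_top_of_le_ne_top ?_ (le_trans (measure_mono (Metric.ball_subset_ball ?_)) (H.ball_nat z 0))
      · exact ENNReal.mul_ne_top ENNReal.ofReal_ne_top (H.v_ne_top z)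
      · have : Real.sqrt s ≤ 1 := Real.sqrt_le_one.2 hs.2
        simpa using this
    have hmono : ∀ z : M, (H.μ (Metric.ball z (1/2))).toReal ≤ (H.μ (Metric.ball z (Real.sqrt s))).toReal :=
      fun z => ENNReal.toReal_mono (hfin z) (measure_mono (Metric.ball_subset_ball hsq))
    have hx := H.v_pos x
    have hy' := H.v_pos y
    have h2 : C / Real.sqrt ((H.μ (Metric.ball x (Real.sqrt s))).toReal
            * (H.μ (Metric.ball y (Real.sqrt s))).toReal)
          * Real.exp (-c * dist x y ^ 2 / s) ≤ C * G y := by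
      calc _ ≤ C / Real.sqrt ((H.μ (Metric.ball x (1/2))).toReal
            * (H.μ (Metric.ball y (1/2))).toReal) * Real.exp (-c * dist x y ^ 2) := by
            gcongr
            · exact hfin x
            · exact hfin y
            · rw [div_le_iff₀ hs0]
              have : 0 ≤ c * dist x y ^ 2 := by positivity
              nlinarith [hs.2]
        _ = C * (Real.exp (-c * dist x y ^ 2) / Real.sqrt ((H.μ (Metric.ball x (1/2))).toReal
            * (H.μ (Metric.ball y (1/2))).toReal)) := by ring
        _ ≤ _ := by gcongr
    have h3 : (1/4:ℝ)^m ≤ s ^ m := by gcongr; exact hs.1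
    have h4 : (1/4:ℝ)^m * |H.dp m s x y| ≤ C * G y :=
      le_trans (mul_le_mul_of_nonneg_right h3 (abs_nonneg _)) (h1.trans h2)
    calc |H.dp m s x y| = 4 ^ m * ((1/4:ℝ)^m * |H.dp m s x y|) := by
          rw [← mul_assoc, ← mul_pow]; norm_num
      _ ≤ 4 ^ m * (C * G y) := by gcongr
      _ = _ := by ring
  · rw [integral_const_mul]; gcongr

lemma meas_deriv {Ω : Type*} [MeasurableSpace Ω] (u : ℝ → Ω → ℝ) (u' : Ω → ℝ) (t : ℝ)
    (hm : ∀ s, t ≤ s → Measurable (u s)) (hd : ∀ ω, HasDerivAt (fun s => u s ω) (u' ω) t) :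
    Measurable u' := by
  have hseq : Filter.Tendsto (fun n : ℕ => (1:ℝ) / ((n:ℝ) + 1)) Filter.atTop (nhdsWithin 0 (Set.Ioi 0)) := by
    refine tendsto_nhdsWithin_iff.2 ⟨tendsto_one_div_add_atTop_nhds_zero_nat, ?_⟩
    exact Filter.Eventually.of_forall fun n => by simp only [Set.mem_Ioi]; positivity
  refine measurable_of_tendsto_metrizable
    (f := fun (n : ℕ) ω => ((1:ℝ) / ((n:ℝ) + 1))⁻¹ • (u (t + (1:ℝ) / ((n:ℝ) + 1)) ω - u t ω)) ?_ ?_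
  · intro n
    have h1 : Measurable (u (t + (1:ℝ) / ((n:ℝ) + 1))) :=
      hm _ (by have : (0:ℝ) ≤ (1:ℝ) / ((n:ℝ) + 1) := by positivity
               linarith)
    exact Measurable.const_mul (h1.sub (hm t le_rfl)) _
  · rw [tendsto_pi_nhds]
    intro ω
    exact (hd ω).tendsto_slope_zero_right.comp hseq

lemma dp_hasDeriv (m : ℕ) (t : ℝ) (ht : 0 < t) (x y : M) :
    HasDerivAt (fun s => H.dp m s x y) (H.dp (m+1) t x y) t := by
  have := (H.smooth x y m t ht).hasDerivAt
  unfold dp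
  rw [iteratedDeriv_succ]
  exact this

lemma dp_meas (m : ℕ) : ∀ (t : ℝ), 0 < t → Measurable (Function.uncurry (H.dp m t)) := by
  induction m with
  | zero => exact fun t ht => H.p_meas t ht
  | succ m ih =>
    intro t ht
    refine meas_deriv (fun s => Function.uncurry (H.dp m s)) _ t (fun s hs => ih s (by linarith)) ?_
    rintro ⟨x, y⟩
    exact H.dp_hasDeriv m t ht x y

lemma dp_meas' (m : ℕ) (t : ℝ) (ht : 0 < t) (x : M) : Measurable (fun y => H.dp m t x y) :=
  (H.dp_meas m t ht).comp measurable_prodMk_left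

lemma supNorm_lt {f : M → ℝ} {A : ℝ} (hA : ∀ x, |f x| ≤ A) : supNorm f < ⊤ := by
  unfold supNorm
  refine lt_of_le_of_lt (iSup_le fun x => ?_) (ENNReal.ofReal_lt_top (r := A))
  rw [← enorm_eq_nnnorm, Real.enorm_eq_ofReal_abs]
  exact ENNReal.ofReal_le_ofReal (hA x)

lemma D_eq {f : M → ℝ} {A : ℝ} (hf : Measurable f) (hA : ∀ x, |f x| ≤ A) (m : ℕ) (t : ℝ)
    (ht : 0 < t) (x : M) : H.D m t f x = ∫ y, H.dp m t x y * f y ∂H.μ :=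
  H.diff_under_int f hf (supNorm_lt hA) m x t ht

lemma p_int_mul {f : M → ℝ} {A : ℝ} (hf : Measurable f) (hA : ∀ x, |f x| ≤ A) (t : ℝ)
    (ht : 0 < t) (x : M) : Integrable (fun y => H.p t x y * f y) H.μ :=
  (H.p_int t ht x).mul_bdd (c := A) hf.aestronglyMeasurable (Filter.Eventually.of_forall hA)

lemma S_bd {f : M → ℝ} {A : ℝ} (hA : ∀ x, |f x| ≤ A) (t : ℝ)
    (ht : 0 < t) (x : M) : |H.S t f x| ≤ A := by
  unfold S
  have h1 : ∫ y, H.p t x y * A ∂H.μ = A := by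
    rw [integral_mul_const, H.conservative t ht x, one_mul]
  rw [← h1]
  rw [← Real.norm_eq_abs]
  refine norm_integral_le_of_norm_le ((H.p_int t ht x).mul_const A) (Filter.Eventually.of_forall fun y => ?_)
  rw [norm_mul, Real.norm_of_nonneg (H.p_nonneg t ht x y)]
  exact mul_le_mul_of_nonneg_left (hA y) (H.p_nonneg t ht x y)

lemma S_meas {f : M → ℝ} (hf : Measurable f) (t : ℝ) (ht : 0 < t) : Measurable (H.S t f) := by
  have := H.sigmaFinite
  have h : Measurable (Function.uncurry fun x y => H.p t x y * f y) :=
    (H.p_meas t ht).mul (hf.comp measurable_snd)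
  exact (h.stronglyMeasurable.integral_prod_right).measurable

lemma S_add {f : M → ℝ} {A : ℝ} (hf : Measurable f) (hA : ∀ x, |f x| ≤ A) (s t : ℝ)
    (hs : 0 < s) (ht : 0 < t) (x : M) : H.S (s + t) f x = H.S s (H.S t f) x := by
  have := H.sigmaFinite
  unfold S
  have hint : Integrable (Function.uncurry fun z y => H.p s x y * H.p t y z * f z)
      (H.μ.prod H.μ) := by
    have hm : Measurable (Function.uncurry fun z y => H.p s x y * H.p t y z * f z) := by
      have h1 : Measurable (fun q : M × M => H.p s x q.2) :=
        ((H.p_meas s hs).comp measurable_prodMk_left).comp measurable_snd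
      have h2 : Measurable (fun q : M × M => H.p t q.2 q.1) := (H.p_meas t ht).comp measurable_swap
      exact (h1.mul h2).mul (hf.comp measurable_fst)
    rw [integrable_prod_iff' hm.aestronglyMeasurable]
    constructor
    · refine Filter.Eventually.of_forall fun y => ?_
      have := (H.p_int_mul hf hA t ht y).const_mul (H.p s x y)
      simpa [Function.uncurry, mul_assoc] using this
    · have h1 : ∀ y, ∫ z, ‖Function.uncurry (fun z y => H.p s x y * H.p t y z * f z) (z, y)‖ ∂H.μ
          = H.p s x y * H.S t (fun z => |f z|) y := by
        intro y
        unfold S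
        rw [← integral_const_mul]
        congr 1
        ext z
        simp only [Function.uncurry, norm_mul, Real.norm_of_nonneg (H.p_nonneg t ht _ _),
          Real.norm_of_nonneg (H.p_nonneg s hs _ _), Real.norm_eq_abs]
        ring
      simp only [h1]
      have habs : ∀ z, |(fun z => |f z|) z| ≤ A := fun z => by simpa using hA z
      exact H.p_int_mul (H.S_meas hf.abs t ht) (H.S_bd habs t ht) s hs x
  calc ∫ z, H.p (s+t) x z * f z ∂H.μ = ∫ z, ∫ y, H.p s x y * H.p t y z * f z ∂H.μ ∂H.μ := by
        congr 1; ext z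
        rw [H.semigroup s t hs ht, integral_mul_const]
    _ = ∫ y, ∫ z, H.p s x y * H.p t y z * f z ∂H.μ ∂H.μ := integral_integral_swap hint
    _ = _ := by
        congr 1; ext y
        rw [← integral_const_mul]
        congr 1; ext z; ring

lemma D_shift {f : M → ℝ} {A : ℝ} (hf : Measurable f) (hA : ∀ x, |f x| ≤ A) (m : ℕ) (s t : ℝ)
    (hs : 0 < s) (ht : 0 < t) (x : M) : H.D m (s + t) f x = H.D m s (H.S t f) x := by
  unfold D
  have h1 : (fun r => H.S (r + t) f x) =ᶠ[nhds s] (fun r => H.S r (H.S t f) x) := by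
    filter_upwards [lt_mem_nhds hs] with r hr
    exact H.S_add hf hA r t hr ht x
  rw [← h1.iteratedDeriv_eq m, iteratedDeriv_comp_add_const m (fun r => H.S r f x) t]

lemma D_bd_loc (m : ℕ) : ∃ K : ℝ, 0 ≤ K ∧ ∀ (f : M → ℝ) (A : ℝ), Measurable f → (∀ x, |f x| ≤ A) →
    ∀ t, 1/4 ≤ t → ∀ x, |H.D m t f x| ≤ K * A := by
  obtain ⟨K, hK, hd⟩ := H.kernel_dom m
  have hsmall : ∀ (f : M → ℝ) (A : ℝ), Measurable f → (∀ x, |f x| ≤ A) →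
      ∀ t ∈ Set.Icc (1/4:ℝ) 1, ∀ x, |H.D m t f x| ≤ K * A := by
    intro f A hf hA t ht x
    have hA0 : 0 ≤ A := (abs_nonneg _).trans (hA x)
    obtain ⟨G, hG, hle, hi⟩ := hd x
    rw [H.D_eq hf hA m t (by linarith [ht.1]) x]
    calc _ ≤ ∫ y, G y * A ∂H.μ := by
          rw [← Real.norm_eq_abs]
          refine norm_integral_le_of_norm_le (hG.mul_const A) ?_
          filter_upwards [hle] with y hy
          rw [norm_mul]
          exact mul_le_mul (hy t ht) (hA y) (norm_nonneg _) ((abs_nonneg _).trans (hy t ht))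
      _ = (∫ y, G y ∂H.μ) * A := integral_mul_const _ _
      _ ≤ _ := by gcongr
  refine ⟨K, hK, fun f A hf hA t ht x => ?_⟩
  rcases le_or_gt t 1 with h | h
  · exact hsmall f A hf hA t ⟨ht, h⟩ x
  · have := H.D_shift hf hA m (1/2) (t - 1/2) (by norm_num) (by linarith) x
    rw [add_sub_cancel] at this
    rw [this]
    exact hsmall _ A (H.S_meas hf _ (by linarith)) (H.S_bd hA _ (by linarith)) _ (by norm_num) x

lemma D_hasDeriv {f : M → ℝ} {A : ℝ} (hf : Measurable f) (hA : ∀ x, |f x| ≤ A) (m : ℕ) (t : ℝ)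
    (ht : 1/4 < t) (x : M) : HasDerivAt (fun s => H.D m s f x) (H.D (m+1) t f x) t := by
  have hsmall : ∀ (f : M → ℝ), Measurable f → (∀ x, |f x| ≤ A) → ∀ t ∈ Set.Ioo (1/4:ℝ) 1,
      HasDerivAt (fun s => H.D m s f x) (H.D (m+1) t f x) t := by
    intro f hf hA t ht
    obtain ⟨K, hK, hd⟩ := H.kernel_dom (m+1)
    obtain ⟨K0, hK0, hd0⟩ := H.kernel_dom m
    obtain ⟨G, hG, hle, hi⟩ := hd x
    obtain ⟨G0, hG0, hle0, hi0⟩ := hd0 x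
    have hN : Set.Ioo (1/4:ℝ) 1 ∈ nhds t := isOpen_Ioo.mem_nhds ht
    have ht0 : 0 < t := by linarith [ht.1]
    have key := (hasDerivAt_integral_of_dominated_loc_of_deriv_le (μ := H.μ) (𝕜 := ℝ)
      (F := fun s y => H.dp m s x y * f y) (F' := fun s y => H.dp (m+1) s x y * f y)
      (x₀ := t) (s := Set.Ioo (1/4:ℝ) 1) (bound := fun y => G y * A) hN ?_ ?_ ?_ ?_ ?_ ?_).2
    · rw [H.D_eq hf hA (m+1) t ht0 x]
      refine key.congr_of_eventuallyEq ?_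
      filter_upwards [hN] with s hs
      exact H.D_eq hf hA m s (by linarith [hs.1]) x
    · filter_upwards [hN] with s hs
      exact ((H.dp_meas' m s (by linarith [hs.1]) x).mul hf).aestronglyMeasurable
    · refine (hG0.mul_const A).mono' ((H.dp_meas' m t ht0 x).mul hf).aestronglyMeasurable ?_
      filter_upwards [hle0] with y hy
      rw [norm_mul]
      have := hy t ⟨ht.1.le, ht.2.le⟩
      exact mul_le_mul this (hA y) (norm_nonneg _) ((abs_nonneg _).trans this)
    · exact ((H.dp_meas' (m+1) t ht0 x).mul hf).aestronglyMeasurable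
    · filter_upwards [hle] with y hy s hs
      rw [norm_mul]
      have := hy s ⟨hs.1.le, hs.2.le⟩
      exact mul_le_mul this (hA y) (norm_nonneg _) ((abs_nonneg _).trans this)
    · exact hG.mul_const A
    · refine Filter.Eventually.of_forall fun y s hs => ?_
      exact (H.dp_hasDeriv m s (by linarith [hs.1]) x y).mul_const (f y)
  rcases lt_or_ge t 1 with h | h
  · exact hsmall f hf hA t ⟨ht, h⟩
  · have hr : 0 < t - 1/2 := by linarith
    have h1 := hsmall _ (H.S_meas hf _ hr) (H.S_bd hA _ hr) (1/2) (by norm_num)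
    have h2 := H.D_shift hf hA (m+1) (1/2) (t - 1/2) (by norm_num) hr x
    rw [add_sub_cancel] at h2
    rw [← h2] at h1
    have h3 : HasDerivAt (fun s => H.D m (s - (t - 1/2)) (H.S (t - 1/2) f) x)
        (H.D (m+1) t f x) t := by
      apply HasDerivAt.comp_sub_const
      have h4 : t - (t - 1/2) = 1/2 := by ring
      rw [h4]
      exact h1
    refine h3.congr_of_eventuallyEq ?_
    filter_upwards [lt_mem_nhds (show t - 1/2 < t by linarith)] with s hs
    have := H.D_shift hf hA m (s - (t - 1/2)) (t - 1/2) (by linarith) hr x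
    rw [← this]; congr 1; ring

lemma D_meas {f : M → ℝ} {A : ℝ} (hf : Measurable f) (hA : ∀ x, |f x| ≤ A) (m : ℕ) :
    ∀ (t : ℝ), 1/4 < t → Measurable (H.D m t f) := by
  induction m with
  | zero =>
    intro t ht
    have := H.S_meas hf t (by linarith)
    unfold D; simpa [iteratedDeriv_zero] using this
  | succ m ih =>
    intro t ht
    exact meas_deriv (fun s => H.D m s f) _ t (fun s hs => ih s (by linarith))
      (fun x => H.D_hasDeriv hf hA m t ht x)

lemma D_comm {f : M → ℝ} {A : ℝ} (hf : Measurable f) (hA : ∀ x, |f x| ≤ A) (m : ℕ) (s : ℝ)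
    (hs : 0 < s) (x : M) : ∀ (t : ℝ), 1/4 < t → H.D m (s + t) f x = H.S s (H.D m t f) x := by
  induction m with
  | zero =>
    intro t ht
    have := H.S_add hf hA s t hs (by linarith) x
    unfold D; simpa [iteratedDeriv_zero] using this
  | succ m ih =>
    intro t ht
    obtain ⟨K, hK, hd⟩ := H.D_bd_loc (m+1)
    obtain ⟨K0, hK0, hd0⟩ := H.D_bd_loc m
    have hN : Set.Ioi (1/4:ℝ) ∈ nhds t := isOpen_Ioi.mem_nhds ht
    have hb : ∀ r, 1/4 < r → ∀ y, |H.D (m+1) r f y| ≤ K * A := fun r hr => hd f A hf hA r hr.le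
    have hb0 : ∀ r, 1/4 < r → ∀ y, |H.D m r f y| ≤ K0 * A := fun r hr => hd0 f A hf hA r hr.le
    have hpm : Measurable (fun y => H.p s x y) := (H.p_meas s hs).comp measurable_prodMk_left
    have key := (hasDerivAt_integral_of_dominated_loc_of_deriv_le (μ := H.μ) (𝕜 := ℝ)
      (F := fun r y => H.p s x y * H.D m r f y) (F' := fun r y => H.p s x y * H.D (m+1) r f y)
      (x₀ := t) (s := Set.Ioi (1/4:ℝ)) (bound := fun y => H.p s x y * (K * A)) hN ?_ ?_ ?_ ?_ ?_ ?_).2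
    · have h1 : HasDerivAt (fun r => H.D m (s + r) f x) (H.D (m+1) (s+t) f x) t :=
        HasDerivAt.comp_const_add s t (H.D_hasDeriv hf hA m (s+t) (by linarith) x)
      refine h1.unique (key.congr_of_eventuallyEq ?_)
      filter_upwards [hN] with r hr
      exact ih r hr
    · filter_upwards [hN] with r hr
      exact (hpm.mul (H.D_meas hf hA m r hr)).aestronglyMeasurable
    · exact H.p_int_mul (H.D_meas hf hA m t ht) (hb0 t ht) s hs x
    · exact (hpm.mul (H.D_meas hf hA (m+1) t ht)).aestronglyMeasurable
    · refine Filter.Eventually.of_forall fun y r hr => ?_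
      rw [norm_mul, Real.norm_of_nonneg (H.p_nonneg s hs x y)]
      exact mul_le_mul_of_nonneg_left (hb r hr y) (H.p_nonneg s hs x y)
    · exact (H.p_int s hs x).mul_const _
    · refine Filter.Eventually.of_forall fun y r hr => ?_
      exact (H.D_hasDeriv hf hA m r hr y).const_mul (H.p s x y)

lemma D_D {f : M → ℝ} {A : ℝ} (hf : Measurable f) (hA : ∀ x, |f x| ≤ A) (m j : ℕ) (s t : ℝ)
    (hs : 0 < s) (ht : 1/4 < t) (x : M) :
    H.D (j + m) (s + t) f x = H.D j s (H.D m t f) x := by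
  have h1 : (fun r => H.D m (r + t) f x) =ᶠ[nhds s] (fun r => H.S r (H.D m t f) x) := by
    filter_upwards [lt_mem_nhds hs] with r hr
    exact H.D_comm hf hA m r hr x t ht
  have h2 : H.D j s (H.D m t f) x = iteratedDeriv j (fun r => H.D m (r + t) f x) s :=
    (h1.iteratedDeriv_eq j).symm
  rw [h2, iteratedDeriv_comp_add_const j (fun r => H.D m r f x) t]
  unfold D
  have h3 : (fun r => iteratedDeriv m (fun s => H.S s f x) r) = deriv^[m] (fun s => H.S s f x) := by
    rw [← iteratedDeriv_eq_iterate]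
  rw [h3, iteratedDeriv_eq_iterate, iteratedDeriv_eq_iterate, Function.iterate_add_apply]

lemma P_eq (b : ℕ) (f : M → ℝ) (x : M) : H.P b 1 f x =
    ∑ k ∈ Finset.range b, ((Nat.factorial k : ℝ))⁻¹ * (-1 : ℝ) ^ k * H.D k 1 f x := by
  unfold P D
  simp

lemma P_bd_of (b : ℕ) (f : M → ℝ) (x : M) (B : ℕ → ℝ) (hB : ∀ k, |H.D k 1 f x| ≤ B k) :
    |H.P b 1 f x| ≤ ∑ k ∈ Finset.range b, B k := by
  rw [P_eq]
  refine (Finset.abs_sum_le_sum_abs _ _).trans (Finset.sum_le_sum fun k _ => ?_)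
  rw [abs_mul, abs_mul, abs_pow, abs_neg, abs_one, one_pow, mul_one, abs_inv, Nat.abs_cast]
  have h1 : ((k.factorial : ℝ))⁻¹ ≤ 1 := inv_le_one_of_one_le₀ (by exact_mod_cast k.factorial_pos)
  calc _ ≤ 1 * |H.D k 1 f x| := by gcongr
    _ ≤ _ := by rw [one_mul]; exact hB k

lemma P_meas {f : M → ℝ} {A : ℝ} (hf : Measurable f) (hA : ∀ x, |f x| ≤ A) (b : ℕ) :
    Measurable (H.P b 1 f) := by
  have : H.P b 1 f = fun x => ∑ k ∈ Finset.range b,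
      ((Nat.factorial k : ℝ))⁻¹ * (-1 : ℝ) ^ k * H.D k 1 f x := funext (H.P_eq b f)
  rw [this]
  exact Finset.measurable_sum _ fun k _ => (H.D_meas hf hA k 1 (by norm_num)).const_mul _

/-- the low derivatives, controlled by backward integration from time two -/
lemma low_deriv (a' j : ℕ) (hj : j ≤ a') : ∃ K : ℝ, 0 ≤ K ∧ ∀ (f : M → ℝ) (A N : ℝ), Measurable f →
    (∀ x, |f x| ≤ A) → (∀ x, |H.S 1 f x| ≤ N) → (∀ x, |H.D a' (1/2) f x| ≤ N) →
    ∀ t ∈ Set.Icc (1:ℝ) 2, ∀ x, |H.D (a' - j) t f x| ≤ K * N := by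
  induction j with
  | zero =>
    refine ⟨1, zero_le_one, fun f A N hf hA h1 h2 t ht x => ?_⟩
    have := H.D_comm hf hA a' (t - 1/2) (by linarith [ht.1]) x (1/2) (by norm_num)
    rw [sub_add_cancel] at this
    rw [Nat.sub_zero, this, one_mul]
    exact H.S_bd h2 _ (by linarith [ht.1]) x
  | succ j ih =>
    obtain ⟨K, hK, hd⟩ := ih (by omega)
    obtain ⟨K1, hK1, hd1⟩ := H.D_bd_loc (a' - (j+1))
    refine ⟨K1 + K, by positivity, fun f A N hf hA h1 h2 t ht x => ?_⟩
    have hN : 0 ≤ N := (abs_nonneg _).trans (h1 x)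
    have e1 : |H.D (a' - (j+1)) 2 f x| ≤ K1 * N := by
      have := H.D_shift hf hA (a' - (j+1)) 1 1 (by norm_num) (by norm_num) x
      rw [one_add_one_eq_two] at this
      rw [this]
      exact hd1 _ N (H.S_meas hf 1 (by norm_num)) h1 1 (by norm_num) x
    have hsucc : a' - (j+1) + 1 = a' - j := by omega
    have e2 : ‖H.D (a' - (j+1)) 2 f x - H.D (a' - (j+1)) t f x‖ ≤ K * N * ‖(2:ℝ) - t‖ := by
      refine Convex.norm_image_sub_le_of_norm_hasDerivWithin_le (s := Set.Icc (1:ℝ) 2)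
        (f := fun r => H.D (a' - (j+1)) r f x) (f' := fun r => H.D (a' - j) r f x)
        (fun r hr => ?_) (fun r hr => hd f A N hf hA h1 h2 r hr x) (convex_Icc 1 2) ht (by norm_num)
      have := H.D_hasDeriv hf hA (a' - (j+1)) r (by linarith [hr.1]) x
      rw [hsucc] at this
      exact this.hasDerivWithinAt
    have e3 : ‖(2:ℝ) - t‖ ≤ 1 := by
      rw [Real.norm_of_nonneg (by linarith [ht.2])]; linarith [ht.1]
    have e4 : K * N * ‖(2:ℝ) - t‖ ≤ K * N := mul_le_of_le_one_right (by positivity) e3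
    rw [Real.norm_eq_abs] at e2
    have e5 := abs_sub_abs_le_abs_sub (H.D (a' - (j+1)) t f x) (H.D (a' - (j+1)) 2 f x)
    rw [abs_sub_comm] at e5
    linarith

lemma D_one_bd (a' k : ℕ) : ∃ K : ℝ, 0 ≤ K ∧ ∀ (f : M → ℝ) (A N : ℝ), Measurable f →
    (∀ x, |f x| ≤ A) → (∀ x, |H.S 1 f x| ≤ N) → (∀ x, |H.D a' (1/2) f x| ≤ N) →
    ∀ x, |H.D k 1 f x| ≤ K * N := by
  rcases le_or_gt k a' with h | h
  · obtain ⟨K, hK, hd⟩ := H.low_deriv a' (a' - k) (by omega)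
    refine ⟨K, hK, fun f A N hf hA h1 h2 x => ?_⟩
    have := hd f A N hf hA h1 h2 1 (by norm_num) x
    rwa [Nat.sub_sub_self h] at this
  · obtain ⟨K, hK, hd⟩ := H.D_bd_loc (k - a')
    refine ⟨K, hK, fun f A N hf hA h1 h2 x => ?_⟩
    have := H.D_D hf hA a' (k - a') (1/2) (1/2) (by norm_num) (by norm_num) x
    rw [add_halves, Nat.sub_add_cancel h.le] at this
    rw [this]
    exact hd _ N (H.D_meas hf hA a' _ (by norm_num)) h2 _ (by norm_num) x

lemma P_one_bd (a' b : ℕ) : ∃ K : ℝ, 0 ≤ K ∧ ∀ (f : M → ℝ) (A N : ℝ), Measurable f →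
    (∀ x, |f x| ≤ A) → (∀ x, |H.S 1 f x| ≤ N) → (∀ x, |H.D a' (1/2) f x| ≤ N) →
    ∀ x, |H.P b 1 f x| ≤ K * N := by
  choose K hK hd using H.D_one_bd a'
  refine ⟨∑ k ∈ Finset.range b, K k, Finset.sum_nonneg fun k _ => hK k,
    fun f A N hf hA h1 h2 x => ?_⟩
  rw [Finset.sum_mul]
  exact H.P_bd_of b f x _ fun k => hd k f A N hf hA h1 h2 x

/-- The semigroup applied to a low-frequency function. -/
lemma S_P {h : M → ℝ} {A : ℝ} (hh : Measurable h) (hA : ∀ x, |h x| ≤ A) (b : ℕ) (s : ℝ)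
    (hs : 0 < s) (x : M) : H.S s (H.P b 1 h) x = ∑ k ∈ Finset.range b,
      ((Nat.factorial k : ℝ))⁻¹ * (-1 : ℝ) ^ k * H.D k (s + 1) h x := by
  have h0 : H.S s (H.P b 1 h) x = ∫ y, ∑ k ∈ Finset.range b,
      ((Nat.factorial k : ℝ))⁻¹ * (-1 : ℝ) ^ k * (H.p s x y * H.D k 1 h y) ∂H.μ := by
    unfold S
    congr 1; ext y
    rw [P_eq, Finset.mul_sum]
    exact Finset.sum_congr rfl fun k _ => by ring
  rw [h0, integral_finsetSum]
  · refine Finset.sum_congr rfl fun k _ => ?_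
    rw [integral_const_mul, H.D_comm hh hA k s hs x 1 (by norm_num)]
    rfl
  · intro k _
    obtain ⟨K, hK, hd⟩ := H.D_bd_loc k
    exact (H.p_int_mul (H.D_meas hh hA k 1 (by norm_num))
      (hd h A hh hA 1 (by norm_num)) s hs x).const_mul _

lemma D_P (a b : ℕ) : ∃ K : ℝ, 0 ≤ K ∧ ∀ (h : M → ℝ) (A : ℝ), Measurable h → (∀ x, |h x| ≤ A) →
    ∀ s, 0 < s → ∀ x, |H.D a s (H.P b 1 h) x| ≤ K * A := by
  choose K hK hd using H.D_bd_loc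
  -- `D a s (P h) = P-combination of D (a+k) (s+1) h`
  have main : ∀ (a : ℕ) (h : M → ℝ) (A : ℝ), Measurable h → (∀ x, |h x| ≤ A) →
      ∀ s, 0 < s → ∀ x, H.D a s (H.P b 1 h) x = ∑ k ∈ Finset.range b,
      ((Nat.factorial k : ℝ))⁻¹ * (-1 : ℝ) ^ k * H.D (k + a) (s + 1) h x := by
    intro a h A hh hA
    induction a with
    | zero => exact fun s hs x => H.S_P hh hA b s hs x
    | succ a ih =>
      intro s hs x
      have h1 : H.D (a+1) s (H.P b 1 h) x = deriv (fun r => H.D a r (H.P b 1 h) x) s := by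
        unfold D; rw [iteratedDeriv_succ]
      rw [h1]
      refine HasDerivAt.deriv ?_
      have h2 : HasDerivAt (fun r => ∑ k ∈ Finset.range b,
          ((Nat.factorial k : ℝ))⁻¹ * (-1 : ℝ) ^ k * H.D (k + a) (r + 1) h x)
          (∑ k ∈ Finset.range b,
            ((Nat.factorial k : ℝ))⁻¹ * (-1 : ℝ) ^ k * H.D (k + (a + 1)) (s + 1) h x) s := by
        refine HasDerivAt.fun_sum fun k _ => HasDerivAt.const_mul _ ?_
        exact HasDerivAt.comp_add_const s 1 (H.D_hasDeriv hh hA (k + a) (s + 1) (by linarith) x)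
      refine h2.congr_of_eventuallyEq ?_
      filter_upwards [lt_mem_nhds hs] with r hr
      exact ih r hr x
  refine ⟨∑ k ∈ Finset.range b, K (k + a), Finset.sum_nonneg fun k _ => hK _,
    fun h A hh hA s hs x => ?_⟩
  rw [main a h A hh hA s hs x, Finset.sum_mul]
  refine (Finset.abs_sum_le_sum_abs _ _).trans (Finset.sum_le_sum fun k _ => ?_)
  rw [abs_mul, abs_mul, abs_pow, abs_neg, abs_one, one_pow, mul_one, abs_inv, Nat.abs_cast]
  have h1 : ((k.factorial : ℝ))⁻¹ ≤ 1 := inv_le_one_of_one_le₀ (by exact_mod_cast k.factorial_pos)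
  calc _ ≤ 1 * |H.D (k + a) (s + 1) h x| := by gcongr
    _ ≤ _ := by rw [one_mul]; exact hd _ h A hh hA _ (by linarith) x

lemma supNorm_le {f : M → ℝ} {A : ℝ} (hA : ∀ x, |f x| ≤ A) : supNorm f ≤ ENNReal.ofReal A := by
  refine iSup_le fun x => ?_
  rw [← enorm_eq_nnnorm, Real.enorm_eq_ofReal_abs]
  exact ENNReal.ofReal_le_ofReal (hA x)

lemma le_supNorm (f : M → ℝ) (hf : supNorm f ≠ ⊤) (x : M) : |f x| ≤ (supNorm f).toReal := by
  rw [← ENNReal.ofReal_le_iff_le_toReal hf, ← Real.enorm_eq_ofReal_abs, enorm_eq_nnnorm]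
  exact le_iSup (fun x => (‖f x‖₊ : ℝ≥0∞)) x

/-- The Hölder norm controls a finite number which controls the data needed. -/
lemma CNorm_ctrl (a' : ℕ) (α : ℝ) : ∃ C : ℝ, 0 < C ∧ ∀ f : M → ℝ, Measurable f → supNorm f < ⊤ →
    ∃ N : ℝ, 0 ≤ N ∧ ENNReal.ofReal N ≤ ENNReal.ofReal C * H.CNorm a' α f ∧
      (∀ x, |H.S 1 f x| ≤ N) ∧ (∀ x, |H.D a' (1/2) f x| ≤ N) := by
  have hw : 0 < ((1/2:ℝ) ^ (-α / 2)) := by positivity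
  refine ⟨1 + 2 ^ a' * ((1/2:ℝ) ^ (-α / 2))⁻¹, by positivity, fun f hf hfin => ?_⟩
  have hA := le_supNorm f hfin.ne
  obtain ⟨K, hK, hd⟩ := H.D_bd_loc a'
  have hS : supNorm (H.S 1 f) ≠ ⊤ := (supNorm_lt (H.S_bd hA 1 one_pos)).ne
  have hD : supNorm (H.D a' (1/2) f) ≠ ⊤ :=
    (supNorm_lt (hd f _ hf hA (1/2) (by norm_num))).ne
  refine ⟨(supNorm (H.S 1 f)).toReal + (supNorm (H.D a' (1/2) f)).toReal, by positivity, ?_, ?_, ?_⟩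
  · rw [ENNReal.ofReal_add ENNReal.toReal_nonneg ENNReal.toReal_nonneg,
      ENNReal.ofReal_toReal hS, ENNReal.ofReal_toReal hD,
      ENNReal.ofReal_add zero_le_one (by positivity), add_mul, ENNReal.ofReal_one, one_mul]
    refine add_le_add le_self_add ?_
    have hDQ : supNorm (H.D a' (1/2) f) ≤ ENNReal.ofReal (2 ^ a') * supNorm (H.Q a' (1/2) f) := by
      refine iSup_le fun x => ?_
      have h1 : H.D a' (1/2) f x = (-1) ^ a' * (2 ^ a' * H.Q a' (1/2) f x) := by
        unfold D Q
        rw [← mul_assoc, ← mul_assoc, ← mul_assoc, ← mul_pow, ← mul_pow, ← mul_pow]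
        norm_num
      have h2 : (‖H.D a' (1/2) f x‖₊ : ℝ≥0∞) = ENNReal.ofReal (2 ^ a') * ‖H.Q a' (1/2) f x‖₊ := by
        rw [← enorm_eq_nnnorm, ← enorm_eq_nnnorm, Real.enorm_eq_ofReal_abs,
          Real.enorm_eq_ofReal_abs, ← ENNReal.ofReal_mul (by positivity), h1, abs_mul, abs_mul]
        simp
      rw [h2]
      gcongr
      exact le_iSup (fun x => (‖H.Q a' (1/2) f x‖₊ : ℝ≥0∞)) x
    have hQC : ENNReal.ofReal ((1/2:ℝ) ^ (-α / 2)) * supNorm (H.Q a' (1/2) f) ≤ H.CNorm a' α f := by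
      unfold CNorm
      refine le_trans ?_ le_add_self
      exact le_iSup₂ (f := fun (t : ℝ) (_ : t ∈ Set.Ioc (0:ℝ) 1) =>
        ENNReal.ofReal (t ^ (-α / 2)) * supNorm (H.Q a' t f)) (1/2) (by norm_num)
    calc _ ≤ _ := hDQ
      _ = ENNReal.ofReal (2 ^ a' * ((1/2:ℝ) ^ (-α / 2))⁻¹) *
          (ENNReal.ofReal ((1/2:ℝ) ^ (-α / 2)) * supNorm (H.Q a' (1/2) f)) := by
        rw [← mul_assoc, ← ENNReal.ofReal_mul (by positivity), inv_mul_cancel_right₀ hw.ne']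
      _ ≤ _ := by gcongr
  · intro x
    have := le_supNorm _ hS x
    have h0 : 0 ≤ (supNorm (H.D a' (1/2) f)).toReal := ENNReal.toReal_nonneg
    linarith
  · intro x
    have := le_supNorm _ hD x
    have h0 : 0 ≤ (supNorm (H.S 1 f)).toReal := ENNReal.toReal_nonneg
    linarith

end HeatKernelSetup

/-- **Proposition 3.1.** The low-frequency part
`Δ_{-1}(f,g) = P_1^{(b)}( P_1^{(b)} f · P_1^{(b)} g )` satisfies, for any real `α, β`, any
`γ > 0`, any integer `a ≥ γ` and any integer `a' ≥ 1`, the bound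
`‖Δ_{-1}(f,g)‖_{C^γ,(a)} ≤ C ‖f‖_{C^α,(a')} ‖g‖_{C^β,(a')}`. -/
theorem low_frequency_part_estimate
    {M : Type*} [MeasurableSpace M] [MetricSpace M] (H : HeatKernelSetup M)
    (b : ℕ) (hb : 2 ≤ b) (α β γ : ℝ) (hγ : 0 < γ)
    (a : ℕ) (haγ : γ ≤ (a : ℝ)) (a' : ℕ) (ha' : 1 ≤ a') :
    ∃ C, 0 < C ∧ ∀ f g : M → ℝ,
      Measurable f → supNorm f < ⊤ → Measurable g → supNorm g < ⊤ →
      H.CNorm a γ (H.P b 1 (fun y => H.P b 1 f y * H.P b 1 g y))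
        ≤ ENNReal.ofReal C * H.CNorm a' α f * H.CNorm a' β g := by
  obtain ⟨C1, hC1, hc1⟩ := H.CNorm_ctrl a' α
  obtain ⟨C2, hC2, hc2⟩ := H.CNorm_ctrl a' β
  obtain ⟨K, hK, hP⟩ := H.P_one_bd a' b
  obtain ⟨K0, hK0, hD0⟩ := H.D_P 0 b
  obtain ⟨K1, hK1, hD1⟩ := H.D_P a b
  refine ⟨(K0 + K1) * K ^ 2 * C1 * C2 + 1, by positivity, fun f g hf hfb hg hgb => ?_⟩
  obtain ⟨N1, hN1, hle1, hS1, hDf⟩ := hc1 f hf hfb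
  obtain ⟨N2, hN2, hle2, hS2, hDg⟩ := hc2 g hg hgb
  have hAf := HeatKernelSetup.le_supNorm f hfb.ne
  have hAg := HeatKernelSetup.le_supNorm g hgb.ne
  have hPf := hP f _ N1 hf hAf hS1 hDf
  have hPg := hP g _ N2 hg hAg hS2 hDg
  set h : M → ℝ := fun y => H.P b 1 f y * H.P b 1 g y with hh
  have hm : Measurable h := (H.P_meas hf hAf b).mul (H.P_meas hg hAg b)
  have hb' : ∀ x, |h x| ≤ K ^ 2 * (N1 * N2) := by
    intro x
    rw [hh]; simp only [abs_mul]
    calc _ ≤ (K * N1) * (K * N2) :=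
          mul_le_mul (hPf x) (hPg x) (abs_nonneg _) (by positivity)
      _ = _ := by ring
  have e1 : supNorm (H.S 1 (H.P b 1 h)) ≤ ENNReal.ofReal (K0 * (K ^ 2 * (N1 * N2))) :=
    HeatKernelSetup.supNorm_le (hD0 h _ hm hb' 1 one_pos)
  have e2 : ⨆ t ∈ Set.Ioc (0 : ℝ) 1, ENNReal.ofReal (t ^ (-γ / 2)) * supNorm (H.Q a t (H.P b 1 h))
      ≤ ENNReal.ofReal (K1 * (K ^ 2 * (N1 * N2))) := by
    refine iSup₂_le fun t ht => ?_
    have ht0 : 0 < t := ht.1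
    have hq : supNorm (H.Q a t (H.P b 1 h)) ≤ ENNReal.ofReal (t ^ a * (K1 * (K ^ 2 * (N1 * N2)))) := by
      refine HeatKernelSetup.supNorm_le fun x => ?_
      have := hD1 h _ hm hb' t ht0 x
      have hQ : H.Q a t (H.P b 1 h) x = (-1) ^ a * t ^ a * H.D a t (H.P b 1 h) x := rfl
      rw [hQ, abs_mul, abs_mul, abs_pow, abs_neg, abs_one, one_pow, one_mul,
        abs_of_pos (by positivity : 0 < t ^ a)]
      gcongr
    calc _ ≤ ENNReal.ofReal (t ^ (-γ / 2)) * ENNReal.ofReal (t ^ a * (K1 * (K ^ 2 * (N1 * N2)))) := by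
          gcongr
      _ = ENNReal.ofReal ((t ^ (-γ / 2) * t ^ a) * (K1 * (K ^ 2 * (N1 * N2)))) := by
          rw [← ENNReal.ofReal_mul (by positivity), mul_assoc]
      _ ≤ _ := by
          apply ENNReal.ofReal_le_ofReal
          apply mul_le_of_le_one_left (by positivity)
          rw [← Real.rpow_natCast, ← Real.rpow_add ht0]
          exact Real.rpow_le_one ht0.le ht.2 (by linarith)
  unfold HeatKernelSetup.CNorm at *
  calc _ ≤ ENNReal.ofReal (K0 * (K ^ 2 * (N1 * N2))) + ENNReal.ofReal (K1 * (K ^ 2 * (N1 * N2))) :=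
        add_le_add e1 e2
    _ = ENNReal.ofReal ((K0 + K1) * K ^ 2) * (ENNReal.ofReal N1 * ENNReal.ofReal N2) := by
        rw [← ENNReal.ofReal_add (by positivity) (by positivity), ← ENNReal.ofReal_mul hN1,
          ← ENNReal.ofReal_mul (by positivity)]
        congr 1; ring
    _ ≤ _ := mul_le_mul_right (mul_le_mul' hle1 hle2) _
    _ = ENNReal.ofReal ((K0 + K1) * K ^ 2 * C1 * C2) * H.CNorm a' α f * H.CNorm a' β g := by
        rw [ENNReal.ofReal_mul (p := (K0 + K1) * K ^ 2 * C1) (by positivity),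
          ENNReal.ofReal_mul (p := (K0 + K1) * K ^ 2) (by positivity)]
        unfold HeatKernelSetup.CNorm
        ring
    _ ≤ _ := by
        unfold HeatKernelSetup.CNorm
        gcongr
        linarith
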